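/- (Cosphericity test, necessity.) Let Λ₁ = Λ₂ = {1,2} and let Φ consist of all four treatments (i,j), i,j ∈ {1,2}. For each (i,j) let μ_{ij} be a probability measure on ℝ × ℝ (with the Borel product sigma-algebra) whose coordinate functions X(x,y) = x and Y(x,y) = y are square-integrable with strictly positive variances, and let ρ_{ij} denote the correlation of X and Y under μ_{ij}. If the family (μ_{ij}) satisfies selective influences, then |ρ₁₁ρ₁₂ − ρ₂₁ρ₂₂| ≤ √(1 − ρ₁₁²)·√(1 − ρ₁₂²) + √(1 − ρ₂₁²)·√(1 − ρ₂₂²). -/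

import Mathlib

open MeasureTheory

/-- The correlation of the two coordinate functions under a measure on `ℝ × ℝ`. -/
noncomputable def coordCorrelation (μ : Measure (ℝ × ℝ)) : ℝ :=
  ((∫ q, q.1 * q.2 ∂μ) - (∫ q, q.1 ∂μ) * ∫ q, q.2 ∂μ) /
    (Real.sqrt ((∫ q, q.1 ^ 2 ∂μ) - (∫ q, q.1 ∂μ) ^ 2) *
      Real.sqrt ((∫ q, q.2 ^ 2 ∂μ) - (∫ q, q.2 ∂μ) ^ 2))

/-- Gram determinant inequality for three unit vectors. -/
lemma gram_aux {E : Type*} [NormedAddCommGroup E] [InnerProductSpace ℝ E] (u v w : E)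
    (hu : inner ℝ u u = 1) (hv : inner ℝ v v = 1) (hw : inner ℝ w w = 1) :
    |inner ℝ u v * inner ℝ u w - inner ℝ v w| ≤
      Real.sqrt (1 - inner ℝ u v ^ 2) * Real.sqrt (1 - inner ℝ u w ^ 2) := by
  have key : ∀ a b : E, inner ℝ (a - (inner ℝ u a) • u) (b - (inner ℝ u b) • u)
      = inner ℝ a b - inner ℝ u a * inner ℝ u b := by
    intro a b
    simp only [inner_sub_left, inner_sub_right, inner_smul_left, inner_smul_right, hu,
      real_inner_comm u a]
    simp
    try ring
  have h := abs_real_inner_le_norm (v - (inner ℝ u v) • u) (w - (inner ℝ u w) • u)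
  rw [norm_eq_sqrt_real_inner, norm_eq_sqrt_real_inner, key, key, key, hv, hw] at h
  rw [abs_sub_comm, pow_two, pow_two]
  exact h

/-- The centered and scaled variable. -/
noncomputable def nrm {Ω : Type} [MeasurableSpace Ω] (P : Measure Ω) (X : Ω → ℝ) : Ω → ℝ :=
  fun ω => (Real.sqrt ((∫ ω, X ω ^ 2 ∂P) - (∫ ω, X ω ∂P) ^ 2))⁻¹ * (X ω - ∫ ω, X ω ∂P)

lemma nrm_memLp {Ω : Type} [MeasurableSpace Ω] (P : Measure Ω) [IsProbabilityMeasure P]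
    {X : Ω → ℝ} (hX : MemLp X 2 P) : MemLp (nrm P X) 2 P :=
  (hX.sub (memLp_const _)).const_mul _

lemma inner_nrm {Ω : Type} [MeasurableSpace Ω] (P : Measure Ω) [IsProbabilityMeasure P]
    {X Y : Ω → ℝ} (hX : MemLp X 2 P) (hY : MemLp Y 2 P) :
    inner ℝ ((nrm_memLp P hX).toLp _) ((nrm_memLp P hY).toLp _) =
      ((∫ ω, X ω * Y ω ∂P) - (∫ ω, X ω ∂P) * ∫ ω, Y ω ∂P) /
    (Real.sqrt ((∫ ω, X ω ^ 2 ∂P) - (∫ ω, X ω ∂P) ^ 2) *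
      Real.sqrt ((∫ ω, Y ω ^ 2 ∂P) - (∫ ω, Y ω ∂P) ^ 2)) := by
  rw [L2.inner_def]
  have e : ∀ᵐ ω ∂P, inner ℝ ((nrm_memLp P hX).toLp _ ω) ((nrm_memLp P hY).toLp _ ω)
      = nrm P X ω * nrm P Y ω := by
    filter_upwards [(nrm_memLp P hX).coeFn_toLp, (nrm_memLp P hY).coeFn_toLp] with ω h1 h2
    rw [h1, h2]
    simp [mul_comm]
  rw [integral_congr_ae e]
  unfold nrm
  generalize Real.sqrt ((∫ ω, X ω ^ 2 ∂P) - (∫ ω, X ω ∂P) ^ 2) = s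
  generalize Real.sqrt ((∫ ω, Y ω ^ 2 ∂P) - (∫ ω, Y ω ∂P) ^ 2) = t
  have iX : Integrable X P := hX.integrable (by norm_num)
  have iY : Integrable Y P := hY.integrable (by norm_num)
  have iXY : Integrable (fun ω => X ω * Y ω) P := hX.integrable_mul hY
  set a := ∫ ω, X ω ∂P with ha
  set b := ∫ ω, Y ω ∂P with hb
  have e2 : (fun ω => s⁻¹ * (X ω - a) * (t⁻¹ * (Y ω - b))) =
      fun ω => (s⁻¹ * t⁻¹) * (X ω * Y ω - b * X ω - (a * Y ω - a * b)) := by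
    funext ω; ring
  have j1 : Integrable (fun ω => X ω * Y ω - b * X ω) P := iXY.sub (iX.const_mul b)
  have j2 : Integrable (fun ω => a * Y ω - a * b) P :=
    (iY.const_mul a).sub (integrable_const _)
  rw [e2, integral_const_mul, integral_sub j1 j2, integral_sub iXY (iX.const_mul b),
    integral_sub (iY.const_mul a) (integrable_const _), integral_const_mul, integral_const_mul,
    ← ha, ← hb]
  simp only [integral_const, probReal_univ, one_smul]
  rw [div_eq_mul_inv, mul_inv]
  ring

lemma inner_nrm_self {Ω : Type} [MeasurableSpace Ω] (P : Measure Ω) [IsProbabilityMeasure P]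
    {X : Ω → ℝ} (hX : MemLp X 2 P) (h : 0 < (∫ ω, X ω ^ 2 ∂P) - (∫ ω, X ω ∂P) ^ 2) :
    inner ℝ ((nrm_memLp P hX).toLp _) ((nrm_memLp P hX).toLp _) = (1 : ℝ) := by
  rw [inner_nrm P hX hX, Real.mul_self_sqrt h.le]
  simp only [← pow_two]
  exact div_self (ne_of_gt h)

/-- Cosphericity test, necessity. For two binary inputs with all four
treatments allowable and two real-valued outputs whose joint distributions `μ i j` have
square-integrable coordinates with strictly positive variances, if the family satisfies
selective influences then the correlations `ρ_{ij}` satisfy the cosphericity inequality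
`|ρ₁₁ρ₁₂ − ρ₂₁ρ₂₂| ≤ √(1 − ρ₁₁²)√(1 − ρ₁₂²) + √(1 − ρ₂₁²)√(1 − ρ₂₂²)`. -/
theorem cosphericity_test_necessity
    (μ : Fin 2 → Fin 2 → Measure (ℝ × ℝ))
    (hprob : ∀ i j, IsProbabilityMeasure (μ i j))
    (hL2x : ∀ i j, MemLp (fun q : ℝ × ℝ => q.1) 2 (μ i j))
    (hL2y : ∀ i j, MemLp (fun q : ℝ × ℝ => q.2) 2 (μ i j))
    (hvarx : ∀ i j, 0 < (∫ q, q.1 ^ 2 ∂μ i j) - (∫ q, q.1 ∂μ i j) ^ 2)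
    (hvary : ∀ i j, 0 < (∫ q, q.2 ^ 2 ∂μ i j) - (∫ q, q.2 ∂μ i j) ^ 2)
    (hsel : ∃ (Ω : Type) (_ : MeasurableSpace Ω) (P : Measure Ω),
      IsProbabilityMeasure P ∧
      ∃ f g : Fin 2 → Ω → ℝ,
        (∀ i, Measurable (f i)) ∧ (∀ j, Measurable (g j)) ∧
        ∀ i j, Measure.map (fun ω => (f i ω, g j ω)) P = μ i j) :
    |coordCorrelation (μ 0 0) * coordCorrelation (μ 0 1) -
        coordCorrelation (μ 1 0) * coordCorrelation (μ 1 1)| ≤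
      Real.sqrt (1 - coordCorrelation (μ 0 0) ^ 2) *
          Real.sqrt (1 - coordCorrelation (μ 0 1) ^ 2) +
        Real.sqrt (1 - coordCorrelation (μ 1 0) ^ 2) *
          Real.sqrt (1 - coordCorrelation (μ 1 1) ^ 2) := by
  obtain ⟨Ω, _, P, hP, f, g, hf, hg, hm⟩ := hsel
  have hfg : ∀ i j, Measurable (fun ω => (f i ω, g j ω)) := fun i j => (hf i).prodMk (hg j)
  have tr : ∀ i j (F : ℝ × ℝ → ℝ), Measurable F →
      ∫ q, F q ∂μ i j = ∫ ω, F (f i ω, g j ω) ∂P := by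
    intro i j F hF
    rw [← hm i j, integral_map (hfg i j).aemeasurable hF.aestronglyMeasurable]
  have t1 := fun i j => tr i j (fun q => q.1) (by fun_prop)
  have t2 := fun i j => tr i j (fun q => q.2) (by fun_prop)
  have t3 := fun i j => tr i j (fun q => q.1 ^ 2) (by fun_prop)
  have t4 := fun i j => tr i j (fun q => q.2 ^ 2) (by fun_prop)
  have t5 := fun i j => tr i j (fun q => q.1 * q.2) (by fun_prop)
  have hX : ∀ i, MemLp (f i) 2 P := by
    intro i
    have h := hL2x i 0
    rw [← hm i 0] at h
    exact h.comp_of_map (hfg i 0).aemeasurable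
  have hY : ∀ j, MemLp (g j) 2 P := by
    intro j
    have h := hL2y 0 j
    rw [← hm 0 j] at h
    exact h.comp_of_map (hfg 0 j).aemeasurable
  have vX : ∀ i, 0 < (∫ ω, f i ω ^ 2 ∂P) - (∫ ω, f i ω ∂P) ^ 2 := by
    intro i
    have h := hvarx i 0
    rwa [t1, t3] at h
  have vY : ∀ j, 0 < (∫ ω, g j ω ^ 2 ∂P) - (∫ ω, g j ω ∂P) ^ 2 := by
    intro j
    have h := hvary 0 j
    rwa [t2, t4] at h
  have hc : ∀ i j, coordCorrelation (μ i j) =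
      inner ℝ ((nrm_memLp P (hX i)).toLp _) ((nrm_memLp P (hY j)).toLp _) := by
    intro i j
    rw [inner_nrm P (hX i) (hY j), coordCorrelation, t1, t2, t3, t4, t5]
  have k := fun i => gram_aux _ _ _ (inner_nrm_self P (hX i) (vX i))
    (inner_nrm_self P (hY 0) (vY 0)) (inner_nrm_self P (hY 1) (vY 1))
  simp only [← hc] at k
  have k0 := k 0
  have k1 := k 1
  rw [abs_le] at k0 k1 ⊢
  constructor <;> linarith [k0.1, k0.2, k1.1, k1.2]
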